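/- arXiv:1605.01243 — 2 statements merged into one kernel-verified Lean document; each statement's English description precedes it below -/
import Mathlib

section
/- Let T > 0 and θ > 1 be real numbers and set γ = (θ−1)/θ. Then there exists a constant C > 0, depending only on T and θ, such that for every positive integer n, the step sizes of the power time grid satisfy ∑_{k=1}^{n} s_k^θ ≤ C n^{−(θ−1)} (1 + log n). -/
open Finset

theorem rpow_sub_rpow_sub_one_le {x γ : ℝ} (hx : 1 ≤ x) (hγ : γ ≤ 1) :
    x ^ γ - (x - 1) ^ γ ≤ x ^ (γ - 1) := by
  have hx0 : 0 < x := by linarith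
  rcases hx.eq_or_lt with rfl | hx1
  · have := Real.rpow_nonneg (le_refl (0 : ℝ)) γ
    simpa using this
  · have hy : 0 < x - 1 := by linarith
    have hanti : x ^ (γ - 1) ≤ (x - 1) ^ (γ - 1) :=
      Real.rpow_le_rpow_of_nonpos hy (by linarith) (by linarith)
    have hxγ : x ^ γ = x ^ (γ - 1) * x := by
      rw [← Real.rpow_add_one hx0.ne', sub_add_cancel]
    have hyγ : (x - 1) ^ γ = (x - 1) ^ (γ - 1) * (x - 1) := by
      rw [← Real.rpow_add_one hy.ne', sub_add_cancel]
    rw [hxγ, hyγ]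
    nlinarith

theorem power_grid_step_rpow_le {T θ x m : ℝ} (hT : 0 ≤ T) (hθ : 1 < θ) (hx : 1 ≤ x)
    (hm : 0 ≤ m) :
    (T * (x ^ ((θ - 1) / θ) - (x - 1) ^ ((θ - 1) / θ)) / m ^ ((θ - 1) / θ)) ^ θ ≤
      T ^ θ * m ^ (-(θ - 1)) * x⁻¹ := by
  have hθ0 : 0 < θ := by linarith
  have hx0 : 0 ≤ x := by linarith
  have hγ0 : 0 ≤ (θ - 1) / θ := div_nonneg (by linarith) hθ0.le
  have hγ1 : (θ - 1) / θ ≤ 1 := (div_le_one hθ0).2 (by linarith)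
  have hmγ : 0 ≤ m ^ ((θ - 1) / θ) := Real.rpow_nonneg hm _
  have hstep : 0 ≤ x ^ ((θ - 1) / θ) - (x - 1) ^ ((θ - 1) / θ) :=
    sub_nonneg.2 (Real.rpow_le_rpow (by linarith) (by linarith) hγ0)
  have hxpow : (x ^ ((θ - 1) / θ - 1)) ^ θ = x⁻¹ := by
    rw [← Real.rpow_mul hx0, ← Real.rpow_neg_one]
    congr 1
    field_simp
    ring
  have hmpow : (m ^ ((θ - 1) / θ)) ^ θ = m ^ (θ - 1) := by
    rw [← Real.rpow_mul hm, div_mul_cancel₀ _ hθ0.ne']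
  calc
    _ ≤ (T * x ^ ((θ - 1) / θ - 1) / m ^ ((θ - 1) / θ)) ^ θ := by
      have := rpow_sub_rpow_sub_one_le hx hγ1
      refine Real.rpow_le_rpow (by positivity) ?_ hθ0.le
      gcongr
    _ = T ^ θ * m ^ (-(θ - 1)) * x⁻¹ := by
      rw [Real.div_rpow (by positivity) hmγ, Real.mul_rpow hT (by positivity), hxpow, hmpow,
        Real.rpow_neg hm]
      ring

/-- For the power time grid with step sizes `s_k = T (k^γ - (k-1)^γ) / n^γ`,
if `θ > 1` and `γ = (θ-1)/θ`, then there is a constant `C > 0` (depending only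
on `T`, `θ`) with `∑_{k=1}^n s_k^θ ≤ C n^(-(θ-1)) (1 + log n)` for all `n ≥ 1`. -/
theorem power_grid_sum_pow_bound_critical_gamma (T θ : ℝ) (hT : 0 < T) (hθ : 1 < θ) :
    ∃ C : ℝ, 0 < C ∧ ∀ n : ℕ, 0 < n →
      ∑ k ∈ Finset.Icc 1 n,
          (T * ((k : ℝ) ^ ((θ - 1) / θ) - ((k : ℝ) - 1) ^ ((θ - 1) / θ)) /
              (n : ℝ) ^ ((θ - 1) / θ)) ^ θ ≤
        C * (n : ℝ) ^ (-(θ - 1)) * (1 + Real.log n) := by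
  refine ⟨T ^ θ, Real.rpow_pos_of_pos hT θ, fun n _ => ?_⟩
  have hharm : ∑ k ∈ Finset.Icc 1 n, (k : ℝ)⁻¹ ≤ 1 + Real.log n := by
    have h := harmonic_le_one_add_log n
    rw [harmonic_eq_sum_Icc] at h
    simpa using h
  calc
    _ ≤ ∑ k ∈ Finset.Icc 1 n, T ^ θ * (n : ℝ) ^ (-(θ - 1)) * (k : ℝ)⁻¹ :=
      Finset.sum_le_sum fun k hk => power_grid_step_rpow_le hT.le hθ
        (by exact_mod_cast (Finset.mem_Icc.1 hk).1) n.cast_nonneg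
    _ ≤ _ := by
      rw [← Finset.mul_sum]
      gcongr
end

section
/- Under the semigroup approximation hypotheses, for every positive integer n, every partition 0 = t_0 < t_1 < ⋯ < t_n = T with step sizes s_k = t_k − t_{k−1}, and every x ∈ F, one has ‖P_T x − Q_{(s_n)} ∘ Q_{(s_{n−1})} ∘ ⋯ ∘ Q_{(s_1)} x‖ ≤ A Φ(x) ∑_{k=1}^{n} M^{n−k} s_k^θ. -/
open Finset

variable {F : Type*} [NormedAddCommGroup F] [NormedSpace ℝ F]

/-- The composition `R_m ∘ ⋯ ∘ R_1` of the linear maps `R_1, …, R_m`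
(with `R_1` applied first); the empty composition is the identity map. -/
def compUpTo (R : ℕ → (F →ₗ[ℝ] F)) : ℕ → (F →ₗ[ℝ] F)
  | 0 => LinearMap.id
  | m + 1 => (R (m + 1)).comp (compUpTo R m)

/-- A sequence that increases at each step below `n` is monotone on `{0, …, n}`. -/
theorem le_of_lt_succ_of_le {t : ℕ → ℝ} {n : ℕ} (hmono : ∀ k, k < n → t k < t (k + 1))
    {i j : ℕ} (hij : i ≤ j) (hj : j ≤ n) : t i ≤ t j := by
  induction j, hij using Nat.le_induction with
  | base => exact le_rfl
  | succ j _ ih => exact (ih (by omega)).trans (hmono j (by omega)).le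

/-- Semigroup approximation: if `(P_t)` is a contraction semigroup on `[0,T]`,
`Φ` is nonnegative and nonincreasing along `P`, and `(Q_(s))` are linear maps
with `‖Q_(s) x‖ ≤ M ‖x‖` and one-step error `‖P_s x − Q_(s) x‖ ≤ A s^θ Φ(x)`,
then for any partition `0 = t_0 < t_1 < ⋯ < t_n = T` with steps
`s_k = t_k − t_{k−1}`,
`‖P_T x − Q_(s_n) ∘ ⋯ ∘ Q_(s_1) x‖ ≤ A Φ(x) ∑_{k=1}^n M^{n−k} s_k^θ`. -/
theorem semigroup_approx_partition_bound
    (T : ℝ) (hT : 0 < T)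
    (P : ℝ → (F →ₗ[ℝ] F)) (Q : ℝ → (F →ₗ[ℝ] F)) (Φ : F → ℝ)
    (A θ M : ℝ) (hA : 0 ≤ A) (hθ : 0 < θ) (hM : 1 ≤ M)
    (hsemi : ∀ s t : ℝ, 0 ≤ s → 0 ≤ t → s + t ≤ T → P (s + t) = (P s).comp (P t))
    (hPcontr : ∀ t : ℝ, 0 ≤ t → t ≤ T → ∀ x : F, ‖P t x‖ ≤ ‖x‖)
    (hΦnonneg : ∀ x : F, 0 ≤ Φ x)
    (hΦ : ∀ t : ℝ, 0 ≤ t → t ≤ T → ∀ x : F, Φ (P t x) ≤ Φ x)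
    (hQbdd : ∀ s : ℝ, 0 < s → s ≤ T → ∀ x : F, ‖Q s x‖ ≤ M * ‖x‖)
    (hQerr : ∀ s : ℝ, 0 < s → s ≤ T → ∀ x : F, ‖P s x - Q s x‖ ≤ A * s ^ θ * Φ x)
    (n : ℕ) (hn : 0 < n) (t : ℕ → ℝ)
    (ht0 : t 0 = 0) (htn : t n = T) (hmono : ∀ k, k < n → t k < t (k + 1))
    (x : F) :
    ‖P T x - compUpTo (fun k => Q (t k - t (k - 1))) n x‖ ≤
      A * Φ x * ∑ k ∈ Finset.Icc 1 n, M ^ (n - k) * (t k - t (k - 1)) ^ θ := by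
  have hpoint_nonneg : ∀ m ≤ n, 0 ≤ t m := fun m hm =>
    ht0 ▸ le_of_lt_succ_of_le hmono m.zero_le hm
  have hpoint_le : ∀ m ≤ n, t m ≤ T := fun m hm => htn ▸ le_of_lt_succ_of_le hmono hm le_rfl
  suffices h : ∀ m, 1 ≤ m → m ≤ n →
      ‖P (t m) x - compUpTo (fun k => Q (t k - t (k - 1))) m x‖ ≤
        A * Φ x * ∑ k ∈ Finset.Icc 1 m, M ^ (m - k) * (t k - t (k - 1)) ^ θ by
    simpa only [htn] using h n hn le_rfl
  intro m hm
  induction m, hm using Nat.le_induction with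
  | base =>
    intro h1
    have hpos : 0 < t 1 := by simpa only [ht0, zero_add] using hmono 0 hn
    have herr := hQerr (t 1) hpos (hpoint_le 1 h1) x
    simp only [compUpTo, Finset.Icc_self, Finset.sum_singleton, Nat.sub_self, ht0, sub_zero,
      pow_zero, one_mul, LinearMap.comp_id, zero_add]
    linarith
  | succ m hm ih =>
    intro hm1
    have hmn : m ≤ n := by omega
    have ih := ih hmn
    have hstep := hmono m hm1
    have hnonneg := hpoint_nonneg m hmn
    have hle := hpoint_le (m + 1) hm1
    set C := compUpTo (fun k => Q (t k - t (k - 1))) m x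
    set s := t (m + 1) - t m with hs
    have hs_pos : 0 < s := sub_pos.mpr hstep
    have hs_le : s ≤ T := by linarith
    have hP : P (t (m + 1)) x = P s (P (t m) x) := by
      have hcomp := hsemi s (t m) hs_pos.le hnonneg (by linarith)
      rw [hs, sub_add_cancel] at hcomp
      rw [hcomp, LinearMap.comp_apply]
    have hcompUpTo : compUpTo (fun k => Q (t k - t (k - 1))) (m + 1) x = Q s C := rfl
    have hsum : ∑ k ∈ Finset.Icc 1 (m + 1), M ^ (m + 1 - k) * (t k - t (k - 1)) ^ θ =
        M * ∑ k ∈ Finset.Icc 1 m, M ^ (m - k) * (t k - t (k - 1)) ^ θ + s ^ θ := by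
      rw [Finset.sum_Icc_succ_top (by omega), Finset.mul_sum]
      congr 1
      · refine Finset.sum_congr rfl fun k hk => ?_
        rw [Nat.succ_sub (Finset.mem_Icc.mp hk).2, pow_succ']
        ring
      · simp [hs]
    have hlocal : ‖P s (P (t m) x) - Q s (P (t m) x)‖ ≤ A * s ^ θ * Φ x :=
      (hQerr s hs_pos hs_le _).trans <| mul_le_mul_of_nonneg_left
        (hΦ (t m) hnonneg (hpoint_le m hmn) x) (by positivity)
    have hpropagated : ‖Q s (P (t m) x - C)‖ ≤
        M * (A * Φ x * ∑ k ∈ Finset.Icc 1 m, M ^ (m - k) * (t k - t (k - 1)) ^ θ) :=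
      (hQbdd s hs_pos hs_le _).trans (mul_le_mul_of_nonneg_left ih (by linarith))
    rw [hP, hcompUpTo, hsum]
    calc ‖P s (P (t m) x) - Q s C‖
        = ‖(P s (P (t m) x) - Q s (P (t m) x)) + Q s (P (t m) x - C)‖ := by
          rw [map_sub, sub_add_sub_cancel]
      _ ≤ _ := norm_add_le _ _
      _ ≤ _ := add_le_add hlocal hpropagated
      _ = _ := by ring
end
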